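/- arXiv:1305.3733 — 2 statements merged into one kernel-verified Lean document; each statement's English description precedes it below -/
import Mathlib

section
/- Let G ∈ {0,1}^{k×n} be a generator matrix and let m ≠ m' be distinct messages in {0,1}^k with ternary codewords c, c'. Then the minimum, over all pairs of erasure matrices E₁, E₂ ∈ 2^G satisfying m(G+E₁) = m'(G+E₂) over GF(2), of max{w(E₁), w(E₂)} (this set of pairs is nonempty, e.g. E₁ = E₂ = G) equals: w₃ if w₃ > w₇+w₂+w₄; w₇ if w₇ > w₃+w₂+w₄; and ⌈(w₂+w₃+w₄+w₇)/2⌉ otherwise. -/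
/-- The weight of a binary matrix: its number of `1` entries. -/
def wt {k n : ℕ} (E : Matrix (Fin k) (Fin n) (ZMod 2)) : ℕ :=
  (Finset.univ.filter fun p : Fin k × Fin n => E p.1 p.2 = 1).card

/-- `E ∈ 2^G`: the erasure matrix `E` has `1`s only where `G` has `1`s. -/
def IsErasureFor {k n : ℕ} (G E : Matrix (Fin k) (Fin n) (ZMod 2)) : Prop :=
  ∀ i j, E i j = 1 → G i j = 1

/-- `s_j(m) = Σᵢ mᵢ G_{ij}` computed over the integers: the number of rows `i`
with `mᵢ = 1` and `G_{ij} = 1`. -/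
def intSum {k n : ℕ} (G : Matrix (Fin k) (Fin n) (ZMod 2))
    (m : Fin k → ZMod 2) (j : Fin n) : ℕ :=
  (Finset.univ.filter fun i => m i = 1 ∧ G i j = 1).card

/-- Block size `w₂`: coordinates where the ternary codeword of `m` is `1`
and that of `m'` is a soft zero `0̄`. -/
def w2 {k n : ℕ} (G : Matrix (Fin k) (Fin n) (ZMod 2))
    (m m' : Fin k → ZMod 2) : ℕ :=
  (Finset.univ.filter fun j =>
    Odd (intSum G m j) ∧ Even (intSum G m' j) ∧ intSum G m' j ≠ 0).card

/-- Block size `w₃`: coordinates where the ternary codeword of `m` is `1`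
and that of `m'` is a hard zero `0`. -/
def w3 {k n : ℕ} (G : Matrix (Fin k) (Fin n) (ZMod 2))
    (m m' : Fin k → ZMod 2) : ℕ :=
  (Finset.univ.filter fun j => Odd (intSum G m j) ∧ intSum G m' j = 0).card

/-- Block size `w₄`: coordinates where the ternary codeword of `m` is a soft
zero `0̄` and that of `m'` is `1`. -/
def w4 {k n : ℕ} (G : Matrix (Fin k) (Fin n) (ZMod 2))
    (m m' : Fin k → ZMod 2) : ℕ :=
  (Finset.univ.filter fun j =>
    (Even (intSum G m j) ∧ intSum G m j ≠ 0) ∧ Odd (intSum G m' j)).card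

/-- Block size `w₇`: coordinates where the ternary codeword of `m` is a hard
zero `0` and that of `m'` is `1`. -/
def w7 {k n : ℕ} (G : Matrix (Fin k) (Fin n) (ZMod 2))
    (m m' : Fin k → ZMod 2) : ℕ :=
  (Finset.univ.filter fun j => intSum G m j = 0 ∧ Odd (intSum G m' j)).card

/-- The distance `η₀(c,c')` between the ternary codewords of `m` and `m'`:
`w₃` if `w₃ > w₇+w₂+w₄`; `w₇` if `w₇ > w₃+w₂+w₄`;
`⌈(w₂+w₃+w₄+w₇)/2⌉` otherwise. -/
def eta0 {k n : ℕ} (G : Matrix (Fin k) (Fin n) (ZMod 2))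
    (m m' : Fin k → ZMod 2) : ℕ :=
  if w7 G m m' + w2 G m m' + w4 G m m' < w3 G m m' then w3 G m m'
  else if w3 G m m' + w2 G m m' + w4 G m m' < w7 G m m' then w7 G m m'
  else (w2 G m m' + w3 G m m' + w4 G m m' + w7 G m m' + 1) / 2

/-!
Column `j` of the codeword of `m` can be flipped by erasures exactly when its ternary symbol is not
a hard zero, and then a single erasure does it. Let `D` be the set of columns in which the binary
codewords of `m` and `m'` differ. The problem becomes: choose the columns `A` flipped for `m` and
`B` flipped for `m'` so that `A ∆ B = D`, each avoiding the hard zeros of its own codeword, and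
minimize the larger cardinality. Now `A` must contain the `w₃` columns of `D` where `m'` has a hard
zero, `B` the `w₇` columns of `D` where `m` has one, and `|A| + |B| ≥ |D| = w₂ + w₃ + w₄ + w₇`.
A partition of `D` that is as balanced as these constraints permit attains the resulting bound, and
`η₀` is the maximum `max {w₃, w₇, ⌈|D| / 2⌉}` written by cases.
-/

section

open Matrix
open scoped Finset symmDiff

section Finset

variable {α : Type*} [DecidableEq α] {A B D N N' : Finset α}

lemma card_le_card_add_card_of_symmDiff_eq (h : A ∆ B = D) : #D ≤ #A + #B :=
  h ▸ (Finset.card_le_card symmDiff_le_sup).trans (Finset.card_union_le A B)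

lemma sdiff_subset_left_of_symmDiff_eq (hB : B ⊆ N') (h : A ∆ B = D) : D \ N' ⊆ A := by
  have hD : D ⊆ N' ∪ A := calc
    D ⊆ A ∪ B := h ▸ symmDiff_le_sup
    _ ⊆ A ∪ N' := Finset.union_subset_union_right hB
    _ = N' ∪ A := Finset.union_comm A N'
  exact sdiff_le_iff.mpr hD

lemma max_card_sdiff_le_max_card (hA : A ⊆ N) (hB : B ⊆ N') (h : A ∆ B = D) :
    max (max #(D \ N') #(D \ N)) ((#D + 1) / 2) ≤ max #A #B := by
  have hleft : #(D \ N') ≤ #A := Finset.card_le_card (sdiff_subset_left_of_symmDiff_eq hB h)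
  have hright : #(D \ N) ≤ #B :=
    Finset.card_le_card (sdiff_subset_left_of_symmDiff_eq hA (symmDiff_comm B A ▸ h))
  have hsum : #D ≤ #A + #B := card_le_card_add_card_of_symmDiff_eq h
  omega

lemma exists_symmDiff_eq_and_max_card_eq (hD : D ⊆ N ∪ N') :
    ∃ A ⊆ N, ∃ B ⊆ N', A ∆ B = D ∧
      max #A #B = max (max #(D \ N') #(D \ N)) ((#D + 1) / 2) := by
  have hsub : D \ N' ⊆ D ∩ N := Finset.subset_inter Finset.sdiff_subset (sdiff_le_iff'.mpr hD)
  have hle : #(D \ N') ≤ #(D ∩ N) := Finset.card_le_card hsub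
  have hsplit : #(D ∩ N) + #(D \ N) = #D := Finset.card_inter_add_card_sdiff D N
  -- The size of `A` is `⌈#D / 2⌉`, clamped to the range that the constraints on `A` permit.
  obtain ⟨A, hA, hAN, hcardA⟩ := Finset.exists_subsuperset_card_eq hsub
    (n := max #(D \ N') (min #(D ∩ N) ((#D + 1) / 2))) (by omega) (by omega)
  have hAD : A ⊆ D := hAN.trans Finset.inter_subset_left
  have hcardB : #(D \ A) = #D - #A := Finset.card_sdiff_of_subset hAD
  refine ⟨A, hAN.trans Finset.inter_subset_right, D \ A, ?_, ?_, by omega⟩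
  · exact sdiff_le_comm.mp hA
  · rw [Finset.disjoint_sdiff.symmDiff_eq_sup]
    exact Finset.union_sdiff_of_subset hAD

end Finset

section BinaryVector

variable {ι : Type*} [Fintype ι] {u v : ι → ZMod 2} {i : ι}

/-- The support of a binary vector, as a finset: it identifies addition over `GF(2)` with symmetric
difference. -/
def supp (v : ι → ZMod 2) : Finset ι :=
  Finset.univ.filter fun i => v i = 1

lemma mem_supp : i ∈ supp v ↔ v i = 1 := by
  simp only [supp, Finset.mem_filter_univ]

lemma supp_injective : Function.Injective (supp (ι := ι)) := by
  intro u v h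
  have eq_of_eq_one_iff : ∀ a b : ZMod 2, (a = 1 ↔ b = 1) → a = b := by decide
  exact funext fun i => eq_of_eq_one_iff _ _ (by rw [← mem_supp, h, mem_supp])

lemma supp_add [DecidableEq ι] (u v : ι → ZMod 2) : supp (u + v) = supp u ∆ supp v := by
  have add_eq_one_iff : ∀ a b : ZMod 2, a + b = 1 ↔ a = 1 ∧ b ≠ 1 ∨ b = 1 ∧ a ≠ 1 := by decide
  ext i
  simp only [mem_supp, Finset.mem_symmDiff, Pi.add_apply, add_eq_one_iff, ne_eq]

lemma add_eq_add_iff_supp_symmDiff_eq [DecidableEq ι] {a b : ι → ZMod 2} :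
    u + a = v + b ↔ supp a ∆ supp b = supp u ∆ supp v := by
  have add_eq_add_iff : ∀ x y s t : ZMod 2, x + s = y + t ↔ s + t = x + y := by decide
  rw [← supp_add, ← supp_add, supp_injective.eq_iff, funext_iff, funext_iff]
  exact forall_congr' fun _ => add_eq_add_iff _ _ _ _

lemma vecMul_add_eq_vecMul_add_iff {κ : Type*} [Fintype κ] [DecidableEq ι]
    {G G' E₁ E₂ : Matrix κ ι (ZMod 2)} {m m' : κ → ZMod 2} :
    m ᵥ* (G + E₁) = m' ᵥ* (G' + E₂) ↔
      supp (m ᵥ* E₁) ∆ supp (m' ᵥ* E₂) = supp (m ᵥ* G) ∆ supp (m' ᵥ* G') := by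
  rw [vecMul_add, vecMul_add, add_eq_add_iff_supp_symmDiff_eq]

end BinaryVector

section Erasure

variable {k n : ℕ} {G E : Matrix (Fin k) (Fin n) (ZMod 2)} {m : Fin k → ZMod 2} {j : Fin n}

lemma vecMul_apply_eq_intSum (G : Matrix (Fin k) (Fin n) (ZMod 2)) (m : Fin k → ZMod 2)
    (j : Fin n) : (m ᵥ* G) j = intSum G m j := by
  have mul_eq_ite : ∀ a b : ZMod 2, a * b = if a = 1 ∧ b = 1 then 1 else 0 := by decide
  simp only [vecMul, dotProduct, intSum, mul_eq_ite, Finset.sum_boole]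

lemma mem_supp_vecMul : j ∈ supp (m ᵥ* G) ↔ Odd (intSum G m j) := by
  rw [mem_supp, vecMul_apply_eq_intSum, ZMod.natCast_eq_one_iff_odd]

/-- The coordinates at which the ternary codeword of `m` is not a hard zero: these are the ones that
an erasure matrix can flip. -/
def ternarySupp (G : Matrix (Fin k) (Fin n) (ZMod 2)) (m : Fin k → ZMod 2) : Finset (Fin n) :=
  Finset.univ.filter fun j => intSum G m j ≠ 0

lemma mem_ternarySupp : j ∈ ternarySupp G m ↔ intSum G m j ≠ 0 := by
  simp only [ternarySupp, Finset.mem_filter_univ]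

lemma mem_ternarySupp_iff_exists : j ∈ ternarySupp G m ↔ ∃ i, m i = 1 ∧ G i j = 1 := by
  simp only [mem_ternarySupp, intSum, Finset.card_ne_zero, Finset.Nonempty, Finset.mem_filter_univ]

lemma supp_vecMul_subset_ternarySupp (G : Matrix (Fin k) (Fin n) (ZMod 2)) (m : Fin k → ZMod 2) :
    supp (m ᵥ* G) ⊆ ternarySupp G m :=
  fun _ hj => mem_ternarySupp.mpr (mem_supp_vecMul.mp hj).pos.ne'

lemma IsErasureFor.ternarySupp_subset (hE : IsErasureFor G E) (m : Fin k → ZMod 2) :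
    ternarySupp E m ⊆ ternarySupp G m := by
  intro j hj
  obtain ⟨i, hmi, hij⟩ := mem_ternarySupp_iff_exists.mp hj
  exact mem_ternarySupp_iff_exists.mpr ⟨i, hmi, hE i j hij⟩

lemma card_supp_vecMul_le_wt (E : Matrix (Fin k) (Fin n) (ZMod 2)) (m : Fin k → ZMod 2) :
    #(supp (m ᵥ* E)) ≤ wt E := by
  refine Finset.card_le_card_of_surjOn Prod.snd fun j hj => ?_
  obtain ⟨i, -, hij⟩ := mem_ternarySupp_iff_exists.mp (supp_vecMul_subset_ternarySupp E m hj)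
  exact ⟨(i, j), by simpa using hij, rfl⟩

lemma exists_isErasureFor_supp_vecMul_eq {A : Finset (Fin n)} (hA : A ⊆ ternarySupp G m) :
    ∃ E, IsErasureFor G E ∧ supp (m ᵥ* E) = A ∧ wt E = #A := by
  choose row hm hG using fun j : A => mem_ternarySupp_iff_exists.mp (hA j.2)
  let E : Matrix (Fin k) (Fin n) (ZMod 2) :=
    fun i j => if ∃ h : j ∈ A, row ⟨j, h⟩ = i then 1 else 0
  have hE : ∀ {i j}, E i j = 1 ↔ ∃ h : j ∈ A, row ⟨j, h⟩ = i := by simp [E]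
  refine ⟨E, fun i j hij => ?_, Finset.ext fun j => ?_, ?_⟩
  · obtain ⟨hj, rfl⟩ := hE.mp hij
    exact hG ⟨j, hj⟩
  · by_cases hj : j ∈ A <;> simp [mem_supp, vecMul, dotProduct, E, hj, hm]
  · have hinj : Function.Injective fun j : A => (row j, (j : Fin n)) :=
      fun _ _ h => Subtype.ext (congrArg Prod.snd h)
    rw [← Fintype.card_coe A, ← Finset.card_univ, ← Finset.card_image_of_injective _ hinj, wt]
    congr 1
    ext ⟨i, j⟩
    simp [hE, and_comm]

end Erasure

section Blocks

variable {k n : ℕ} (G : Matrix (Fin k) (Fin n) (ZMod 2)) (m m' : Fin k → ZMod 2)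

lemma w3_eq_card : w3 G m m' = #((supp (m ᵥ* G) ∆ supp (m' ᵥ* G)) \ ternarySupp G m') := by
  unfold w3
  congr 1
  ext j
  simp only [Finset.mem_filter_univ, Finset.mem_sdiff, Finset.mem_symmDiff, mem_supp_vecMul,
    mem_ternarySupp]
  grind

lemma w7_eq_w3_swap : w7 G m m' = w3 G m' m := by
  simp only [w7, w3, and_comm]

lemma w4_eq_w2_swap : w4 G m m' = w2 G m' m := by
  simp only [w4, w2, and_comm]

lemma w7_eq_card : w7 G m m' = #((supp (m ᵥ* G) ∆ supp (m' ᵥ* G)) \ ternarySupp G m) := by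
  rw [w7_eq_w3_swap, w3_eq_card, symmDiff_comm]

lemma w2_add_w3_eq_card : w2 G m m' + w3 G m m' = #(supp (m ᵥ* G) \ supp (m' ᵥ* G)) := by
  rw [← Finset.card_filter_add_card_filter_not (s := supp (m ᵥ* G) \ supp (m' ᵥ* G))
    fun j => intSum G m' j ≠ 0]
  unfold w2 w3
  congr 2 <;>
  · ext j
    simp only [Finset.mem_filter, Finset.mem_univ, Finset.mem_sdiff, mem_supp_vecMul]
    grind

lemma w2_add_w3_add_w4_add_w7_eq_card :
    w2 G m m' + w3 G m m' + w4 G m m' + w7 G m m' = #(supp (m ᵥ* G) ∆ supp (m' ᵥ* G)) := by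
  rw [w4_eq_w2_swap, w7_eq_w3_swap, add_assoc _ (w2 G m' m), w2_add_w3_eq_card, w2_add_w3_eq_card]
  exact (Finset.card_union_of_disjoint disjoint_sdiff_sdiff).symm

lemma eta0_eq_max :
    eta0 G m m' =
      max (max (w3 G m m') (w7 G m m'))
        ((w2 G m m' + w3 G m m' + w4 G m m' + w7 G m m' + 1) / 2) := by
  unfold eta0
  split_ifs <;> omega

end Blocks

end

/-- For distinct messages `m ≠ m'`, the minimum over all pairs of
erasure matrices `E₁, E₂ ∈ 2^G` with `m(G+E₁) = m'(G+E₂)` of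
`max{w(E₁), w(E₂)}` equals `η₀(c,c')` as given by the case formula above. -/
theorem stmt2 (k n : ℕ) (G : Matrix (Fin k) (Fin n) (ZMod 2))
    (m m' : Fin k → ZMod 2) (hmm : m ≠ m') :
    IsLeast {v : ℕ | ∃ E₁ E₂ : Matrix (Fin k) (Fin n) (ZMod 2),
        IsErasureFor G E₁ ∧ IsErasureFor G E₂ ∧
        Matrix.vecMul m (G + E₁) = Matrix.vecMul m' (G + E₂) ∧
        v = max (wt E₁) (wt E₂)}
      (eta0 G m m') := by
  rw [eta0_eq_max, w2_add_w3_add_w4_add_w7_eq_card, w3_eq_card, w7_eq_card]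
  constructor
  · have hD := symmDiff_le_sup.trans <| Finset.union_subset_union
      (supp_vecMul_subset_ternarySupp G m) (supp_vecMul_subset_ternarySupp G m')
    obtain ⟨A, hA, B, hB, hAB, hmax⟩ := exists_symmDiff_eq_and_max_card_eq hD
    obtain ⟨E₁, hE₁, rfl, hwt₁⟩ := exists_isErasureFor_supp_vecMul_eq hA
    obtain ⟨E₂, hE₂, rfl, hwt₂⟩ := exists_isErasureFor_supp_vecMul_eq hB
    exact ⟨E₁, E₂, hE₁, hE₂, vecMul_add_eq_vecMul_add_iff.mpr hAB, by rw [hwt₁, hwt₂, hmax]⟩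
  · rintro _ ⟨E₁, E₂, hE₁, hE₂, heq, rfl⟩
    have hA := (supp_vecMul_subset_ternarySupp E₁ m).trans (hE₁.ternarySupp_subset m)
    have hB := (supp_vecMul_subset_ternarySupp E₂ m').trans (hE₂.ternarySupp_subset m')
    exact (max_card_sdiff_le_max_card hA hB (vecMul_add_eq_vecMul_add_iff.mp heq)).trans
      (max_le_max (card_supp_vecMul_le_wt E₁ m) (card_supp_vecMul_le_wt E₂ m'))
end

section
/- Let γ₁, γ₂ > 0 and 0 < δ < γ₁+γ₂ be real numbers, define ψ(x) = x^x for x > 0 with ψ(0)=1, and set λ* = γ₁·δ/(γ₁+γ₂). Then ψ(γ₁)·ψ(γ₂) / ( ψ(λ*)·ψ(γ₁−λ*)·ψ(δ−λ*)·ψ(γ₂−δ+λ*) ) = ψ(γ₁+γ₂) / ( ψ(δ)·ψ(γ₁+γ₂−δ) ). -/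
/-!
Put `p = δ / (γ₁ + γ₂)` and `q = 1 - p`. The arguments of `ψ` in the two denominators are `γ₁ * p`,
`γ₁ * q`, `γ₂ * p`, `γ₂ * q` and `(γ₁ + γ₂) * p`, `(γ₁ + γ₂) * q`. Since
`ψ (x * y) = ψ x ^ y * ψ y ^ x`, splitting `x` in the proportions `p` and `q` gives
`ψ x / (ψ (x * p) * ψ (x * q)) = (ψ p * ψ q) ^ (-x)`, which turns addition of `x` into
multiplication.
-/

theorem rpow_self_pos {x : ℝ} (hx : 0 ≤ x) : 0 < x ^ x := by
  rcases hx.eq_or_lt with rfl | hx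
  · rw [Real.rpow_zero]
    exact one_pos
  · exact Real.rpow_pos_of_pos hx x

theorem mul_rpow_self {x y : ℝ} (hx : 0 ≤ x) (hy : 0 ≤ y) :
    (x * y) ^ (x * y) = (x ^ x) ^ y * (y ^ y) ^ x := by
  rw [Real.mul_rpow hx hy, Real.rpow_mul hx, mul_comm x y, Real.rpow_mul hy]

theorem mul_rpow_self_mul_mul_rpow_self {x p q : ℝ} (hx : 0 ≤ x) (hp : 0 ≤ p) (hq : 0 ≤ q)
    (hpq : p + q = 1) :
    (x * p) ^ (x * p) * (x * q) ^ (x * q) = x ^ x * (p ^ p * q ^ q) ^ x := by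
  calc (x * p) ^ (x * p) * (x * q) ^ (x * q)
      = ((x ^ x) ^ p * (p ^ p) ^ x) * ((x ^ x) ^ q * (q ^ q) ^ x) := by
        rw [mul_rpow_self hx hp, mul_rpow_self hx hq]
    _ = ((x ^ x) ^ p * (x ^ x) ^ q) * ((p ^ p) ^ x * (q ^ q) ^ x) := mul_mul_mul_comm ..
    _ = x ^ x * (p ^ p * q ^ q) ^ x := by
        rw [← Real.rpow_add (rpow_self_pos hx), hpq, Real.rpow_one,
          ← Real.mul_rpow (rpow_self_pos hp).le (rpow_self_pos hq).le]

/-- The exponential growth term, in Stirling's approximation, of the binomial coefficient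
`x! / ((x * p)! * (x * q)!)` that splits `x` in the proportions `p` and `q`. It is meant for
nonnegative arguments with `p + q = 1`. -/
noncomputable def stirlingBinom (p q x : ℝ) : ℝ :=
  x ^ x / ((x * p) ^ (x * p) * (x * q) ^ (x * q))

theorem stirlingBinom_eq_rpow_neg {x p q : ℝ} (hx : 0 ≤ x) (hp : 0 ≤ p) (hq : 0 ≤ q)
    (hpq : p + q = 1) : stirlingBinom p q x = (p ^ p * q ^ q) ^ (-x) := by
  have hbase : 0 ≤ p ^ p * q ^ q := mul_nonneg (rpow_self_pos hp).le (rpow_self_pos hq).le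
  rw [stirlingBinom, mul_rpow_self_mul_mul_rpow_self hx hp hq hpq,
    div_mul_cancel_left₀ (rpow_self_pos hx).ne', Real.rpow_neg hbase]

theorem stirlingBinom_add {x y p q : ℝ} (hx : 0 ≤ x) (hy : 0 ≤ y) (hp : 0 ≤ p) (hq : 0 ≤ q)
    (hpq : p + q = 1) :
    stirlingBinom p q (x + y) = stirlingBinom p q x * stirlingBinom p q y := by
  have hbase : 0 < p ^ p * q ^ q := mul_pos (rpow_self_pos hp) (rpow_self_pos hq)
  rw [stirlingBinom_eq_rpow_neg (add_nonneg hx hy) hp hq hpq,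
    stirlingBinom_eq_rpow_neg hx hp hq hpq, stirlingBinom_eq_rpow_neg hy hp hq hpq,
    neg_add, Real.rpow_add hbase]

/-- For `γ₁, γ₂ > 0`, `0 < δ < γ₁+γ₂`, `ψ(x)=x^x` (real power,
`ψ(0)=1`), and `λ* = γ₁δ/(γ₁+γ₂)`:
`ψ(γ₁)ψ(γ₂)/(ψ(λ*)ψ(γ₁−λ*)ψ(δ−λ*)ψ(γ₂−δ+λ*)) = ψ(γ₁+γ₂)/(ψ(δ)ψ(γ₁+γ₂−δ))`. -/
theorem stmt11 (γ₁ γ₂ δ : ℝ) (h1 : 0 < γ₁) (h2 : 0 < γ₂) (hδ0 : 0 < δ)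
    (hδ : δ < γ₁ + γ₂) :
    (fun ψ : ℝ → ℝ =>
      ψ γ₁ * ψ γ₂ /
          (ψ (γ₁ * δ / (γ₁ + γ₂)) * ψ (γ₁ - γ₁ * δ / (γ₁ + γ₂)) *
            ψ (δ - γ₁ * δ / (γ₁ + γ₂)) * ψ (γ₂ - δ + γ₁ * δ / (γ₁ + γ₂))) =
        ψ (γ₁ + γ₂) / (ψ δ * ψ (γ₁ + γ₂ - δ)))
      (fun x => x ^ x) := by
  have hs : 0 < γ₁ + γ₂ := add_pos h1 h2
  obtain ⟨p, rfl⟩ : ∃ p, δ = (γ₁ + γ₂) * p := ⟨δ / (γ₁ + γ₂), (mul_div_cancel₀ δ hs.ne').symm⟩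
  have hp : 0 < p := pos_of_mul_pos_right hδ0 hs.le
  have hq : 0 < 1 - p := sub_pos.mpr ((mul_lt_iff_lt_one_right hs).mp hδ)
  have hlam : γ₁ * ((γ₁ + γ₂) * p) / (γ₁ + γ₂) = γ₁ * p := by field_simp
  have hγ₁ : γ₁ - γ₁ * p = γ₁ * (1 - p) := by ring
  have hδγ₁ : (γ₁ + γ₂) * p - γ₁ * p = γ₂ * p := by ring
  have hγ₂ : γ₂ - (γ₁ + γ₂) * p + γ₁ * p = γ₂ * (1 - p) := by ring
  have hsum : γ₁ + γ₂ - (γ₁ + γ₂) * p = (γ₁ + γ₂) * (1 - p) := by ring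
  beta_reduce
  rw [hlam, hγ₁, hδγ₁, hγ₂, hsum, mul_assoc (_ * _), mul_div_mul_comm]
  exact (stirlingBinom_add h1.le h2.le hp.le hq.le (add_sub_cancel p 1)).symm
end
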